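/- arXiv:1803.05893 — 9 statements merged into one kernel-verified Lean document; each statement's English description precedes it below -/
import Mathlib

section
/- In a uni-monotone polygon P with horizontal top edge at height h, visibility is preserved under vertical projection of the viewer to the top edge: if g, p ∈ P and g sees p (the closed segment [g,p] is contained in P), then the point gH = (g.1, h) lies in P and gH sees p. In particular V(g) ⊆ V(gH). -/
open Set

/-- The lower chain: union of the closed segments `[v i, v (i+1)]`, `i = 0, …, n-2`. -/
def lowerChain (n : ℕ) (hn : 2 ≤ n) (v : Fin n → ℝ × ℝ) : Set (ℝ × ℝ) :=
  ⋃ i : Fin (n - 1), segment ℝ (v (Fin.castLE (by omega) i)) (v (Fin.cast (by omega) i.succ))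

/-- The uni-monotone polygon determined by the lower chain and the top height `h`. -/
def uniPoly (n : ℕ) (hn : 2 ≤ n) (v : Fin n → ℝ × ℝ) (h : ℝ) : Set (ℝ × ℝ) :=
  {p : ℝ × ℝ | (v ⟨0, by omega⟩).1 ≤ p.1 ∧ p.1 ≤ (v ⟨n - 1, by omega⟩).1 ∧ p.2 ≤ h ∧
    ∀ t ∈ lowerChain n hn v, t.1 = p.1 → t.2 ≤ p.2}

/-- The top edge: the closed segment from `v 0` to `v (n-1)`. -/
def topEdge (n : ℕ) (hn : 2 ≤ n) (v : Fin n → ℝ × ℝ) : Set (ℝ × ℝ) :=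
  segment ℝ (v ⟨0, by omega⟩) (v ⟨n - 1, by omega⟩)

/-- `p` sees `q` within `S`: the closed segment `[p,q]` is contained in `S`. -/
def seesIn (S : Set (ℝ × ℝ)) (p q : ℝ × ℝ) : Prop := segment ℝ p q ⊆ S

/-- Visibility polygon of `p` within `S`. -/
def visIn (S : Set (ℝ × ℝ)) (p : ℝ × ℝ) : Set (ℝ × ℝ) := {q | q ∈ S ∧ seesIn S p q}

/-! Raising the endpoints of a segment raises every point of it, by convex combination of the two
vertical displacements, and keeps it below any horizontal line that bounds the new endpoints. In a
region whose vertical slices are closed under raising up to height `h`, a segment therefore stays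
inside the region when its endpoints are raised to heights at most `h`. -/

/-- A region lying weakly below height `h` that contains, with each of its points, everything
vertically between that point and height `h`. The first factor is the horizontal direction and the
second factor the vertical one. -/
structure IsFilledUpTo {E F : Type*} [LE F] (S : Set (E × F)) (h : F) : Prop where
  snd_le : ∀ {p : E × F}, p ∈ S → p.2 ≤ h
  mem_of_le : ∀ {x : E} {y z : F}, (x, y) ∈ S → y ≤ z → z ≤ h → (x, z) ∈ S

section Raising

variable {𝕜 E F : Type*} [Semiring 𝕜] [PartialOrder 𝕜] [AddCommMonoid E] [Module 𝕜 E]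
  [AddCommMonoid F] [PartialOrder F] [IsOrderedAddMonoid F] [Module 𝕜 F] [PosSMulMono 𝕜 F]

namespace IsFilledUpTo

variable {S : Set (E × F)} {h : F}

theorem segment_subset_of_le (hS : IsFilledUpTo S h) {x₁ x₂ : E} {y₁ y₂ z₁ z₂ : F}
    (hyz₁ : y₁ ≤ z₁) (hyz₂ : y₂ ≤ z₂) (hz₁ : z₁ ≤ h) (hz₂ : z₂ ≤ h)
    (hsub : segment 𝕜 (x₁, y₁) (x₂, y₂) ⊆ S) : segment 𝕜 (x₁, z₁) (x₂, z₂) ⊆ S := by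
  rintro _ ⟨a, b, ha, hb, hab, rfl⟩
  have hmem : (a • x₁ + b • x₂, a • y₁ + b • y₂) ∈ S := hsub ⟨a, b, ha, hb, hab, rfl⟩
  have hraise : a • y₁ + b • y₂ ≤ a • z₁ + b • z₂ := by gcongr
  have hbound : a • z₁ + b • z₂ ≤ h := convex_Iic (𝕜 := 𝕜) h hz₁ hz₂ ha hb hab
  exact hS.mem_of_le hmem hraise hbound

theorem segment_top_subset [ZeroLEOneClass 𝕜] (hS : IsFilledUpTo S h) {g p : E × F}
    (hsub : segment 𝕜 g p ⊆ S) : segment 𝕜 (g.1, h) p ⊆ S :=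
  hS.segment_subset_of_le (hS.snd_le (hsub (left_mem_segment 𝕜 g p))) le_rfl le_rfl
    (hS.snd_le (hsub (right_mem_segment 𝕜 g p))) hsub

end IsFilledUpTo

theorem stmt_0_general [ZeroLEOneClass 𝕜] {S : Set (E × F)} {h : F} (hS : IsFilledUpTo S h)
    {g p : E × F} (hsee : segment 𝕜 g p ⊆ S) :
    (g.1, h) ∈ S ∧ segment 𝕜 (g.1, h) p ⊆ S ∧
      {q | q ∈ S ∧ segment 𝕜 g q ⊆ S} ⊆ {q | q ∈ S ∧ segment 𝕜 (g.1, h) q ⊆ S} :=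
  have htop : segment 𝕜 (g.1, h) p ⊆ S := hS.segment_top_subset hsee
  ⟨htop (left_mem_segment 𝕜 _ p), htop, fun _ ⟨hq, hgq⟩ => ⟨hq, hS.segment_top_subset hgq⟩⟩

end Raising

theorem isFilledUpTo_uniPoly (n : ℕ) (hn : 2 ≤ n) (v : Fin n → ℝ × ℝ) (h : ℝ) :
    IsFilledUpTo (uniPoly n hn v h) h where
  snd_le := fun ⟨_, _, hle, _⟩ => hle
  mem_of_le := fun ⟨hleft, hright, _, hchain⟩ hyz hz =>
    ⟨hleft, hright, hz, fun t ht htx => (hchain t ht htx).trans hyz⟩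

theorem stmt_0 (n : ℕ) (hn : 2 ≤ n) (v : Fin n → ℝ × ℝ)
    (hmono : ∀ i j : Fin n, i < j → (v i).1 < (v j).1)
    (h : ℝ) (h0 : (v ⟨0, by omega⟩).2 = h) (hlast : (v ⟨n - 1, by omega⟩).2 = h)
    (hbelow : ∀ i : Fin n, (v i).2 ≤ h)
    (g p : ℝ × ℝ) (hg : g ∈ uniPoly n hn v h) (hp : p ∈ uniPoly n hn v h)
    (hsee : seesIn (uniPoly n hn v h) g p) :
    (g.1, h) ∈ uniPoly n hn v h ∧ seesIn (uniPoly n hn v h) (g.1, h) p ∧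
      visIn (uniPoly n hn v h) g ⊆ visIn (uniPoly n hn v h) (g.1, h) :=
  stmt_0_general (isFilledUpTo_uniPoly n hn v h) hsee
end

section
/- For every finite guard cover G of a uni-monotone polygon P (a finite G ⊆ P with P ⊆ ⋃_{g∈G} V(g)), there exists a guard cover G' contained in the top edge H with Set.ncard G' ≤ Set.ncard G. In particular, some minimum-cardinality guard cover of P is contained in H. -/
open Set

/-!
Raise every guard `g = (x, y)` vertically to `(x, h)`. A point of the segment from `(x, h)` to `q`
lies above the corresponding point of the segment from `g` to `q` and, by convexity of the
half-plane below height `h`, not above `h`. Since the polygon contains everything between one of its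
points and the top edge, the raised guard sees all that `g` sees. Raising does not increase the
number of guards, so a minimum guard cover raises to one on the top edge.
-/

section GuardCover

variable {α ι κ : Type*} {S : Set α} {V : ι → Set α} {W : κ → Set α} {A G : Set ι} {B : Set κ}

/-- `G` is a finite set of guards stationed in `A` that together see all of `S`, where a guard `g`
sees the set `V g`. The set `A` is separate from `S` so that guards can be confined to the top
edge. -/
structure IsGuardCover (V : ι → Set α) (S : Set α) (A G : Set ι) : Prop where
  finite : G.Finite
  subset : G ⊆ A
  covers : S ⊆ ⋃ g ∈ G, V g

theorem IsGuardCover.image {f : ι → κ} (hG : IsGuardCover V S A G) (hf : MapsTo f A B)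
    (hVW : ∀ g ∈ A, V g ⊆ W (f g)) : IsGuardCover W S B (f '' G) where
  finite := hG.finite.image f
  subset := (hf.mono_left hG.subset).image_subset
  covers := by
    rw [biUnion_image]
    exact hG.covers.trans (biUnion_mono Subset.rfl fun g hg ↦ hVW g (hG.subset hg))

theorem IsGuardCover.exists_ncard_min (hG : IsGuardCover V S A G) :
    ∃ G₁, IsGuardCover V S A G₁ ∧ ∀ G₂, IsGuardCover V S A G₂ → G₁.ncard ≤ G₂.ncard :=
  ⟨Function.argminOn ncard {G | IsGuardCover V S A G} ⟨G, hG⟩, Function.argminOn_mem ..,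
    fun _ hG₂ ↦ Function.argminOn_le ncard _ hG₂⟩

end GuardCover

section Raising

variable {𝕜 E F : Type*}

/-- The points of `S` visible from `p` within `S`, in any space with segments; `visIn` is the case
of the real plane. -/
def visibleSet (𝕜 : Type*) [Semiring 𝕜] [PartialOrder 𝕜] [AddCommMonoid E] [SMul 𝕜 E]
    (S : Set E) (p : E) : Set E :=
  {q ∈ S | segment 𝕜 p q ⊆ S}

/-- `S` lies below height `h` and contains, with each of its points, all points vertically above it
up to height `h`. This is the only property of a uni-monotone polygon that lets a guard be raised
to the top edge. -/
structure IsUpwardClosedBelow [LE F] (h : F) (S : Set (E × F)) : Prop where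
  snd_le : ∀ {p}, p ∈ S → p.2 ≤ h
  mem_of_le : ∀ {p y}, p ∈ S → p.2 ≤ y → y ≤ h → (p.1, y) ∈ S

theorem IsUpwardClosedBelow.raise_mem [Preorder F] {h : F} {S : Set (E × F)}
    (hS : IsUpwardClosedBelow h S) {p : E × F} (hp : p ∈ S) : (p.1, h) ∈ S :=
  hS.mem_of_le hp (hS.snd_le hp) le_rfl

variable [Semiring 𝕜] [PartialOrder 𝕜] [ZeroLEOneClass 𝕜] [AddCommMonoid E] [Module 𝕜 E]
  [AddCommMonoid F] [PartialOrder F] [IsOrderedAddMonoid F] [Module 𝕜 F] [PosSMulMono 𝕜 F]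
  {h : F} {S : Set (E × F)}

theorem IsUpwardClosedBelow.segment_raise_subset (hS : IsUpwardClosedBelow h S) {p q : E × F}
    (hpq : segment 𝕜 p q ⊆ S) : segment 𝕜 (p.1, h) q ⊆ S := by
  have hp : p.2 ≤ h := hS.snd_le (hpq (left_mem_segment 𝕜 p q))
  have hq : q.2 ≤ h := hS.snd_le (hpq (right_mem_segment 𝕜 p q))
  rintro _ ⟨a, b, ha, hb, hab, rfl⟩
  have hz : a • p + b • q ∈ S := hpq ⟨a, b, ha, hb, hab, rfl⟩
  have h_above : a • p.2 + b • q.2 ≤ a • h + b • q.2 := by gcongr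
  have h_below : a • h + b • q.2 ≤ h :=
    calc
      a • h + b • q.2 ≤ a • h + b • h := by gcongr
      _ = h := Convex.combo_self hab h
  exact hS.mem_of_le hz h_above h_below

theorem IsUpwardClosedBelow.visibleSet_subset_visibleSet_raise (hS : IsUpwardClosedBelow h S)
    (p : E × F) : visibleSet 𝕜 S p ⊆ visibleSet 𝕜 S (p.1, h) :=
  fun _ ⟨hq, hpq⟩ ↦ ⟨hq, hS.segment_raise_subset hpq⟩

theorem IsUpwardClosedBelow.exists_isGuardCover_top (hS : IsUpwardClosedBelow h S)
    {G : Set (E × F)} (hG : IsGuardCover (visibleSet 𝕜 S) S S G) :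
    ∃ G', IsGuardCover (visibleSet 𝕜 S) S {p ∈ S | p.2 = h} G' ∧ G'.ncard ≤ G.ncard :=
  ⟨(fun p ↦ (p.1, h)) '' G,
    hG.image (fun _ hp ↦ ⟨hS.raise_mem hp, rfl⟩)
      fun p _ ↦ hS.visibleSet_subset_visibleSet_raise p,
    ncard_image_le hG.finite⟩

theorem stmt_1_general (hS : IsUpwardClosedBelow h S) {G : Set (E × F)}
    (hG : IsGuardCover (visibleSet 𝕜 S) S S G) :
    (∃ G', IsGuardCover (visibleSet 𝕜 S) S {p ∈ S | p.2 = h} G' ∧ G'.ncard ≤ G.ncard) ∧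
      ∃ Gm, IsGuardCover (visibleSet 𝕜 S) S {p ∈ S | p.2 = h} Gm ∧
        ∀ G₂, IsGuardCover (visibleSet 𝕜 S) S S G₂ → Gm.ncard ≤ G₂.ncard := by
  refine ⟨hS.exists_isGuardCover_top hG, ?_⟩
  obtain ⟨G₁, hG₁, hmin⟩ := hG.exists_ncard_min
  obtain ⟨Gm, hGm, hle⟩ := hS.exists_isGuardCover_top hG₁
  exact ⟨Gm, hGm, fun G₂ hG₂ ↦ hle.trans (hmin G₂ hG₂)⟩

end Raising

section UniPoly

variable {n : ℕ} (hn : 2 ≤ n) (v : Fin n → ℝ × ℝ)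

theorem isUpwardClosedBelow_uniPoly (h : ℝ) : IsUpwardClosedBelow h (uniPoly n hn v h) where
  snd_le := fun ⟨_, _, hp, _⟩ ↦ hp
  mem_of_le := fun ⟨hleft, hright, _, hchain⟩ hpy hyh ↦
    ⟨hleft, hright, hyh, fun t ht htx ↦ (hchain t ht htx).trans hpy⟩

theorem uniPoly_top_subset_topEdge {h : ℝ} (h0 : (v ⟨0, by omega⟩).2 = h)
    (hlast : (v ⟨n - 1, by omega⟩).2 = h) :
    {p ∈ uniPoly n hn v h | p.2 = h} ⊆ topEdge n hn v := by
  rintro ⟨x, _⟩ ⟨⟨hleft, hright, -⟩, rfl⟩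
  rw [topEdge, ← Prod.mk.eta (p := v ⟨0, _⟩), ← Prod.mk.eta (p := v ⟨n - 1, _⟩), h0, hlast,
    ← Prod.image_mk_segment_left, segment_eq_Icc (hleft.trans hright)]
  exact mem_image_of_mem _ ⟨hleft, hright⟩

end UniPoly

theorem stmt_1 (n : ℕ) (hn : 2 ≤ n) (v : Fin n → ℝ × ℝ)
    (hmono : ∀ i j : Fin n, i < j → (v i).1 < (v j).1)
    (h : ℝ) (h0 : (v ⟨0, by omega⟩).2 = h) (hlast : (v ⟨n - 1, by omega⟩).2 = h)
    (hbelow : ∀ i : Fin n, (v i).2 ≤ h)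
    (G : Set (ℝ × ℝ)) (hGfin : G.Finite) (hGP : G ⊆ uniPoly n hn v h)
    (hGcov : uniPoly n hn v h ⊆ ⋃ g ∈ G, visIn (uniPoly n hn v h) g) :
    (∃ G' : Set (ℝ × ℝ), G'.Finite ∧ G' ⊆ topEdge n hn v ∧
      uniPoly n hn v h ⊆ (⋃ g ∈ G', visIn (uniPoly n hn v h) g) ∧
      G'.ncard ≤ G.ncard) ∧
    ∃ Gm : Set (ℝ × ℝ), Gm.Finite ∧ Gm ⊆ topEdge n hn v ∧
      uniPoly n hn v h ⊆ (⋃ g ∈ Gm, visIn (uniPoly n hn v h) g) ∧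
      ∀ G₂ : Set (ℝ × ℝ), G₂.Finite → G₂ ⊆ uniPoly n hn v h →
        uniPoly n hn v h ⊆ (⋃ g ∈ G₂, visIn (uniPoly n hn v h) g) →
        Gm.ncard ≤ G₂.ncard := by
  have htop := uniPoly_top_subset_topEdge hn v h0 hlast
  obtain ⟨⟨G', hG', hle⟩, Gm, hGm, hmin⟩ :=
    stmt_1_general (𝕜 := ℝ) (isUpwardClosedBelow_uniPoly hn v h) ⟨hGfin, hGP, hGcov⟩
  exact ⟨⟨G', hG'.finite, hG'.subset.trans htop, hG'.covers, hle⟩,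
    Gm, hGm.finite, hGm.subset.trans htop, hGm.covers,
    fun G₂ hfin hsub hcov ↦ hmin G₂ ⟨hfin, hsub, hcov⟩⟩
end

section
/- In a uni-monotone polygon P, coverage of the lower chain from the top edge implies coverage of P: if G ⊆ H (the top edge) and every point of the lower chain LC is seen by some g ∈ G, then every point of P is seen by some g ∈ G. -/
open Set

/-!
Let `q` be the foot of `p` on the lower chain, on the same vertical line and not above `p`. If `g`
sees `q`, then each point of the segment `[g, p]` lies on or vertically above a point of `[g, q]`.
As the polygon contains everything vertically above its points up to height `h`, `g` sees `p`.
Such a `q` exists because the lower chain is connected.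
-/

theorem exists_mem_segment_fst_eq_snd_le {𝕜 E F : Type*} [Semiring 𝕜] [PartialOrder 𝕜]
    [AddCommMonoid E] [Module 𝕜 E] [AddCommMonoid F] [PartialOrder F] [IsOrderedAddMonoid F]
    [Module 𝕜 F] [PosSMulMono 𝕜 F] {g p q z : E × F} (hfst : q.1 = p.1) (hsnd : q.2 ≤ p.2)
    (hz : z ∈ segment 𝕜 g p) : ∃ w ∈ segment 𝕜 g q, w.1 = z.1 ∧ w.2 ≤ z.2 := by
  obtain ⟨a, b, ha, hb, hab, rfl⟩ := hz
  refine ⟨a • g + b • q, ⟨a, b, ha, hb, hab, rfl⟩, by simp [hfst], ?_⟩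
  exact add_le_add_right (smul_le_smul_of_nonneg_left hsnd hb) (a • g.2)

section UniPoly

variable {n : ℕ} (hn : 2 ≤ n) (v : Fin n → ℝ × ℝ)

theorem vertex_mem_lowerChain (i : Fin n) : v i ∈ lowerChain n hn v := by
  rcases Nat.lt_or_ge i (n - 1) with hi | hi
  · exact mem_iUnion.2 ⟨⟨i, hi⟩, left_mem_segment ℝ _ _⟩
  · refine mem_iUnion.2 ⟨⟨n - 2, by omega⟩, ?_⟩
    convert right_mem_segment ℝ _ _
    simp only [Fin.ext_iff, Fin.val_cast, Fin.val_succ]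
    omega

theorem isPreconnected_lowerChain : IsPreconnected (lowerChain n hn v) := by
  obtain ⟨m, rfl⟩ := Nat.exists_eq_add_of_le' hn
  refine IsPreconnected.iUnion_of_chain (fun i ↦ (convex_segment _ _).isPreconnected) fun i ↦ ?_
  induction i using Fin.lastCases with
  | last =>
    rw [Fin.orderSucc_last, inter_self]
    exact ⟨_, left_mem_segment ℝ _ _⟩
  | cast i =>
    rw [Fin.orderSucc_castSucc]
    exact ⟨v i.succ.castSucc, right_mem_segment ℝ _ _, left_mem_segment ℝ _ _⟩

theorem Icc_subset_fst_image_lowerChain :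
    Icc (v ⟨0, by omega⟩).1 (v ⟨n - 1, by omega⟩).1 ⊆ Prod.fst '' lowerChain n hn v :=
  ((isPreconnected_lowerChain hn v).image Prod.fst continuous_fst.continuousOn).Icc_subset
    (mem_image_of_mem _ (vertex_mem_lowerChain hn v _))
    (mem_image_of_mem _ (vertex_mem_lowerChain hn v _))

variable {hn v} {h : ℝ} {g p q z w : ℝ × ℝ}

theorem exists_mem_lowerChain_below (hp : p ∈ uniPoly n hn v h) :
    ∃ q ∈ lowerChain n hn v, q.1 = p.1 ∧ q.2 ≤ p.2 := by
  obtain ⟨hleft, hright, -, habove⟩ := hp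
  obtain ⟨q, hq, hqp⟩ := Icc_subset_fst_image_lowerChain hn v ⟨hleft, hright⟩
  exact ⟨q, hq, hqp, habove q hq hqp⟩

theorem mem_uniPoly_of_snd_le (hw : w ∈ uniPoly n hn v h) (hfst : w.1 = z.1) (hsnd : w.2 ≤ z.2)
    (hz : z.2 ≤ h) : z ∈ uniPoly n hn v h := by
  obtain ⟨hleft, hright, -, habove⟩ := hw
  rw [hfst] at hleft hright habove
  exact ⟨hleft, hright, hz, fun t ht htz ↦ (habove t ht htz).trans hsnd⟩

theorem seesIn_uniPoly_of_snd_le (hgq : seesIn (uniPoly n hn v h) g q) (hfst : q.1 = p.1)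
    (hsnd : q.2 ≤ p.2) (hp : p.2 ≤ h) : seesIn (uniPoly n hn v h) g p := by
  intro z hz
  have hg : g.2 ≤ h := (hgq (left_mem_segment ℝ g q)).2.2.1
  have hzh : z.2 ≤ h := (convex_Iic h).segment_subset hg hp (Prod.segment_subset g p hz).2
  obtain ⟨w, hw, hwz, hle⟩ := exists_mem_segment_fst_eq_snd_le hfst hsnd hz
  exact mem_uniPoly_of_snd_le (hgq hw) hwz hle hzh

end UniPoly

theorem stmt_2_general (n : ℕ) (hn : 2 ≤ n) (v : Fin n → ℝ × ℝ) (h : ℝ) (G : Set (ℝ × ℝ))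
    (hcovLC : ∀ q ∈ lowerChain n hn v, ∃ g ∈ G, seesIn (uniPoly n hn v h) g q) :
    ∀ p ∈ uniPoly n hn v h, ∃ g ∈ G, seesIn (uniPoly n hn v h) g p := by
  intro p hp
  obtain ⟨q, hq, hfst, hsnd⟩ := exists_mem_lowerChain_below hp
  obtain ⟨g, hg, hgq⟩ := hcovLC q hq
  exact ⟨g, hg, seesIn_uniPoly_of_snd_le hgq hfst hsnd hp.2.2.1⟩

theorem stmt_2 (n : ℕ) (hn : 2 ≤ n) (v : Fin n → ℝ × ℝ)
    (hmono : ∀ i j : Fin n, i < j → (v i).1 < (v j).1)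
    (h : ℝ) (h0 : (v ⟨0, by omega⟩).2 = h) (hlast : (v ⟨n - 1, by omega⟩).2 = h)
    (hbelow : ∀ i : Fin n, (v i).2 ≤ h)
    (G : Set (ℝ × ℝ)) (hGH : G ⊆ topEdge n hn v)
    (hcovLC : ∀ q ∈ lowerChain n hn v, ∃ g ∈ G, seesIn (uniPoly n hn v h) g q) :
    ∀ p ∈ uniPoly n hn v h, ∃ g ∈ G, seesIn (uniPoly n hn v h) g p := by
  exact stmt_2_general n hn v h G hcovLC
end

section
/- In a uni-monotone polygon P, visibility of the vertically projected point on the lower chain implies visibility: if g ∈ H, p ∈ P, and pLC is a point of the lower chain LC with pLC.1 = p.1 (so pLC.2 ≤ p.2), then g sees pLC implies g sees p. -/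
open Set

/-!
Move the endpoint `pLC` vertically up to `p`. Each point of the segment from `g` then moves
vertically upward and stays below the top edge, because both endpoints are below it. Inside the
polygon's vertical strip such a move cannot cross the chain.
-/

section Segment

variable {𝕜 E F : Type*} [Semiring 𝕜] [PartialOrder 𝕜] [AddCommMonoid E] [SMul 𝕜 E]
  [AddCommMonoid F] [Preorder F] [IsOrderedAddMonoid F] [SMul 𝕜 F] [PosSMulMono 𝕜 F]

theorem exists_mem_segment_fst_eq_snd_le_s3 {g p q b : E × F} (hfst : q.1 = p.1)
    (hsnd : q.2 ≤ p.2) (hb : b ∈ segment 𝕜 g p) :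
    ∃ a ∈ segment 𝕜 g q, a.1 = b.1 ∧ a.2 ≤ b.2 := by
  obtain ⟨s, t, hs, ht, hst, rfl⟩ := hb
  refine ⟨s • g + t • q, ⟨s, t, hs, ht, hst, rfl⟩, ?_, ?_⟩
  · simp only [Prod.fst_add, Prod.smul_fst, hfst]
  · exact add_le_add_right (smul_le_smul_of_nonneg_left hsnd ht) (s • g.2)

end Segment

section UniPoly

variable {n : ℕ} {hn : 2 ≤ n} {v : Fin n → ℝ × ℝ} {h : ℝ}

theorem mem_uniPoly_of_fst_eq_of_snd_le {a b : ℝ × ℝ} (ha : a ∈ uniPoly n hn v h)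
    (hfst : a.1 = b.1) (hsnd : a.2 ≤ b.2) (hb : b.2 ≤ h) : b ∈ uniPoly n hn v h := by
  obtain ⟨hleft, hright, -, habove⟩ := ha
  exact ⟨hfst ▸ hleft, hfst ▸ hright, hb,
    fun t ht htb ↦ (habove t ht (htb.trans hfst.symm)).trans hsnd⟩

theorem stmt_3_general {g p q : ℝ × ℝ} (hfst : q.1 = p.1) (hsnd : q.2 ≤ p.2) (hp : p.2 ≤ h)
    (hsee : seesIn (uniPoly n hn v h) g q) : seesIn (uniPoly n hn v h) g p := by
  intro b hb
  obtain ⟨a, ha, hab_fst, hab_snd⟩ := exists_mem_segment_fst_eq_snd_le_s3 hfst hsnd hb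
  have hg : g.2 ≤ h := (hsee (left_mem_segment ℝ g q)).2.2.1
  have hb_top : b.2 ≤ h :=
    (convex_halfSpace_le (LinearMap.snd ℝ ℝ ℝ).isLinear h).segment_subset hg hp hb
  exact mem_uniPoly_of_fst_eq_of_snd_le (hsee ha) hab_fst hab_snd hb_top

end UniPoly

theorem stmt_3 (n : ℕ) (hn : 2 ≤ n) (v : Fin n → ℝ × ℝ)
    (hmono : ∀ i j : Fin n, i < j → (v i).1 < (v j).1)
    (h : ℝ) (h0 : (v ⟨0, by omega⟩).2 = h) (hlast : (v ⟨n - 1, by omega⟩).2 = h)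
    (hbelow : ∀ i : Fin n, (v i).2 ≤ h)
    (g p pLC : ℝ × ℝ) (hg : g ∈ topEdge n hn v) (hp : p ∈ uniPoly n hn v h)
    (hpLC : pLC ∈ lowerChain n hn v) (hx : pLC.1 = p.1)
    (hsee : seesIn (uniPoly n hn v h) g pLC) :
    seesIn (uniPoly n hn v h) g p :=
  stmt_3_general hx (hp.2.2.2 pLC hpLC hx) hp.2.2.1 hsee
end

section
/- For a terrain T with altitude line at height h, a guard located anywhere on or above the terrain and at height at most h can be lifted vertically to the altitude line without losing visibility: if g = (gx, gy) is on or above T, (v 0).1 ≤ gx ≤ (v (n-1)).1, gy ≤ h, q ∈ T, and every point of the closed segment [g, q] is on or above T, then every point of the closed segment [(gx, h), q] is on or above T. -/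
open Set

/-- The terrain: union of the closed segments `[v i, v (i+1)]`, `i = 0, …, n-2`. -/
def terrain (n : ℕ) (hn : 2 ≤ n) (v : Fin n → ℝ × ℝ) : Set (ℝ × ℝ) :=
  ⋃ i : Fin (n - 1), segment ℝ (v (Fin.castLE (by omega) i)) (v (Fin.cast (by omega) i.succ))

/-- A point `r` is on or above the terrain `T`. -/
def onAbove (T : Set (ℝ × ℝ)) (r : ℝ × ℝ) : Prop :=
  ∀ t ∈ T, t.1 = r.1 → t.2 ≤ r.2

/-- `p` sees `q` (w.r.t. terrain `T`): every point of the segment `[p,q]` is on or above `T`. -/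
def seesT (T : Set (ℝ × ℝ)) (p q : ℝ × ℝ) : Prop :=
  ∀ x ∈ segment ℝ p q, onAbove T x

/-- The altitude line at height `h`: the segment from `((v 0).1, h)` to `((v (n-1)).1, h)`. -/
def altLine (n : ℕ) (hn : 2 ≤ n) (v : Fin n → ℝ × ℝ) (h : ℝ) : Set (ℝ × ℝ) :=
  segment ℝ ((v ⟨0, by omega⟩).1, h) ((v ⟨n - 1, by omega⟩).1, h)

theorem exists_mem_segment_fst_eq_snd_le_s4 {𝕜 E F : Type*} [Semiring 𝕜] [PartialOrder 𝕜]
    [AddCommMonoid E] [SMul 𝕜 E] [AddCommMonoid F] [Preorder F] [IsOrderedAddMonoid F]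
    [SMul 𝕜 F] [PosSMulMono 𝕜 F] {p p' q q' x' : E × F}
    (hp₁ : p.1 = p'.1) (hp₂ : p.2 ≤ p'.2) (hq₁ : q.1 = q'.1) (hq₂ : q.2 ≤ q'.2)
    (hx' : x' ∈ segment 𝕜 p' q') :
    ∃ x ∈ segment 𝕜 p q, x.1 = x'.1 ∧ x.2 ≤ x'.2 := by
  obtain ⟨a, b, ha, hb, hab, rfl⟩ := hx'
  refine ⟨a • p + b • q, ⟨a, b, ha, hb, hab, rfl⟩, ?_, ?_⟩
  · simp only [Prod.fst_add, Prod.smul_fst, hp₁, hq₁]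
  · exact add_le_add (smul_le_smul_of_nonneg_left hp₂ ha) (smul_le_smul_of_nonneg_left hq₂ hb)

theorem onAbove.of_fst_eq_of_snd_le {T : Set (ℝ × ℝ)} {r r' : ℝ × ℝ} (hr : onAbove T r)
    (h₁ : r.1 = r'.1) (h₂ : r.2 ≤ r'.2) : onAbove T r' :=
  fun t ht htr' => (hr t ht (htr'.trans h₁.symm)).trans h₂

theorem stmt_4_general {T : Set (ℝ × ℝ)} {p p' q q' : ℝ × ℝ} (hsee : seesT T p q)
    (hp₁ : p.1 = p'.1) (hp₂ : p.2 ≤ p'.2) (hq₁ : q.1 = q'.1) (hq₂ : q.2 ≤ q'.2) :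
    seesT T p' q' := by
  intro x' hx'
  obtain ⟨x, hx, h₁, h₂⟩ := exists_mem_segment_fst_eq_snd_le_s4 hp₁ hp₂ hq₁ hq₂ hx'
  exact (hsee x hx).of_fst_eq_of_snd_le h₁ h₂

theorem stmt_4 (n : ℕ) (hn : 2 ≤ n) (v : Fin n → ℝ × ℝ)
    (hmono : ∀ i j : Fin n, i < j → (v i).1 < (v j).1)
    (h : ℝ) (hh : ∀ i : Fin n, (v i).2 < h)
    (gx gy : ℝ) (hg : onAbove (terrain n hn v) (gx, gy))
    (hgx1 : (v ⟨0, by omega⟩).1 ≤ gx) (hgx2 : gx ≤ (v ⟨n - 1, by omega⟩).1)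
    (hgy : gy ≤ h)
    (q : ℝ × ℝ) (hq : q ∈ terrain n hn v)
    (hsee : seesT (terrain n hn v) (gx, gy) q) :
    seesT (terrain n hn v) (gx, h) q :=
  stmt_4_general hsee rfl hgy rfl le_rfl
end

section
/- (No-help lemma) For a terrain T with altitude line A at height h: let g, g' ∈ A and p ∈ T with g'.1 < g.1 < p.1. If g' sees p, then g sees p. Equivalently, if g does not see a point p of the terrain to its right, then no point of A to the left of g sees p. -/
open Set

/-!
Let `y` be the point of the sight line `[g', p]` on the vertical line through `g`. Both `g'` and `p`
are at most as high as `g`, hence so is `y`. The point `y` sees `p` along a piece of the old sight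
line, and raising its end `y` vertically to `g` raises every point of that piece vertically, which
never brings it below the terrain.
-/

theorem exists_mem_segment_fst_eq {𝕜 E F : Type*} [Semiring 𝕜] [PartialOrder 𝕜]
    [AddCommMonoid E] [SMul 𝕜 E] [AddCommMonoid F] [SMul 𝕜 F] {p q : E × F} {x : E}
    (hx : x ∈ segment 𝕜 p.1 q.1) : ∃ y ∈ segment 𝕜 p q, y.1 = x := by
  obtain ⟨a, b, ha, hb, hab, rfl⟩ := hx
  exact ⟨a • p + b • q, ⟨a, b, ha, hb, hab, rfl⟩, rfl⟩

theorem onAbove.of_snd_le {T : Set (ℝ × ℝ)} {r s : ℝ × ℝ} (hr : onAbove T r)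
    (hfst : r.1 = s.1) (hsnd : r.2 ≤ s.2) : onAbove T s :=
  fun t ht hts ↦ (hr t ht (hts.trans hfst.symm)).trans hsnd

namespace seesT

variable {T : Set (ℝ × ℝ)} {p p' q q' y : ℝ × ℝ}

theorem of_mem_segment (h : seesT T p q) (hy : y ∈ segment ℝ p q) : seesT T y q :=
  fun x hx ↦ h x ((convex_segment p q).segment_subset hy (right_mem_segment ℝ p q) hx)

theorem of_snd_le (h : seesT T p q) (hp₁ : p.1 = p'.1) (hp₂ : p.2 ≤ p'.2)
    (hq₁ : q.1 = q'.1) (hq₂ : q.2 ≤ q'.2) : seesT T p' q' := by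
  rintro _ ⟨a, b, ha, hb, hab, rfl⟩
  have lower_onAbove : onAbove T (a • p + b • q) := h _ ⟨a, b, ha, hb, hab, rfl⟩
  apply lower_onAbove.of_snd_le
  · simp only [Prod.fst_add, Prod.smul_fst, hp₁, hq₁]
  · simp only [Prod.snd_add, Prod.smul_snd]
    gcongr

end seesT

theorem terrain_subset_of_convex {n : ℕ} {hn : 2 ≤ n} {v : Fin n → ℝ × ℝ} {s : Set (ℝ × ℝ)}
    (hs : Convex ℝ s) (hv : ∀ i, v i ∈ s) : terrain n hn v ⊆ s :=
  iUnion_subset fun _ ↦ hs.segment_subset (hv _) (hv _)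

theorem snd_le_of_mem_terrain {n : ℕ} {hn : 2 ≤ n} {v : Fin n → ℝ × ℝ} {h : ℝ} {p : ℝ × ℝ}
    (hv : ∀ i, (v i).2 ≤ h) (hp : p ∈ terrain n hn v) : p.2 ≤ h :=
  terrain_subset_of_convex (convex_halfSpace_le (LinearMap.snd ℝ ℝ ℝ).isLinear h) hv hp

theorem snd_eq_of_mem_altLine {n : ℕ} {hn : 2 ≤ n} {v : Fin n → ℝ × ℝ} {h : ℝ} {g : ℝ × ℝ}
    (hg : g ∈ altLine n hn v h) : g.2 = h := by
  simpa only [segment_same, mem_singleton_iff] using (Prod.segment_subset _ _ hg).2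

theorem stmt_5_general {T : Set (ℝ × ℝ)} {g g' p : ℝ × ℝ} (hg' : g'.2 ≤ g.2) (hp : p.2 ≤ g.2)
    (hfst : g.1 ∈ uIcc g'.1 p.1) (hsee : seesT T g' p) : seesT T g p := by
  rw [← segment_eq_uIcc] at hfst
  obtain ⟨y, hy, y_fst⟩ := exists_mem_segment_fst_eq hfst
  have y_snd : y.2 ≤ g.2 :=
    (convex_halfSpace_le (LinearMap.snd ℝ ℝ ℝ).isLinear g.2).segment_subset hg' hp hy
  exact (hsee.of_mem_segment hy).of_snd_le y_fst y_snd rfl le_rfl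

theorem stmt_5 (n : ℕ) (hn : 2 ≤ n) (v : Fin n → ℝ × ℝ)
    (hmono : ∀ i j : Fin n, i < j → (v i).1 < (v j).1)
    (h : ℝ) (hh : ∀ i : Fin n, (v i).2 < h)
    (g g' : ℝ × ℝ) (hg : g ∈ altLine n hn v h) (hg' : g' ∈ altLine n hn v h)
    (p : ℝ × ℝ) (hp : p ∈ terrain n hn v)
    (hlt1 : g'.1 < g.1) (hlt2 : g.1 < p.1)
    (hsee : seesT (terrain n hn v) g' p) :
    seesT (terrain n hn v) g p := by
  obtain rfl := snd_eq_of_mem_altLine hg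
  exact stmt_5_general (snd_eq_of_mem_altLine hg').le
    (snd_le_of_mem_terrain (fun i ↦ (hh i).le) hp) (Icc_subset_uIcc ⟨hlt1.le, hlt2.le⟩) hsee
end

section
/- (Empty-triangle lemma) Let T be a terrain and h a height above it. Let c = (c1, h) and q = (q1, h) with c1 ≤ q1, and let w ∈ ℝ × ℝ with c1 ≤ w.1 ≤ q1 and w.2 ≤ h. If every point of the closed segment [c, w] is on or above T and every point of the closed segment [w, q] is on or above T, then every point of the convex hull of {c, q, w} is on or above T. -/
open Set

/-! Cut the triangle `c q w` along the vertical line through `w`. Write a point of the left part as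
`α c + β p + γ w`, where `p` is the point of `[c, q]` above `w`: replacing `p` by `w` pushes it
straight down to the point `α c + (β + γ) w` of `[c, w]`. Likewise the right part is pushed down
onto `[w, q]`, and moving up again never leaves the region on or above the terrain. -/

theorem exists_mem_segment_add_smul_of_mem_segment_add {𝕜 E : Type*} [Semiring 𝕜]
    [PartialOrder 𝕜] [AddCommMonoid E] [Module 𝕜 E] {x a b d : E}
    (hx : x ∈ segment 𝕜 a (b + d)) :
    ∃ y ∈ segment 𝕜 a b, ∃ t : 𝕜, 0 ≤ t ∧ x = y + t • d := by
  obtain ⟨s, t, hs, ht, hst, rfl⟩ := hx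
  exact ⟨s • a + t • b, ⟨s, t, hs, ht, hst, rfl⟩, t, ht, by rw [smul_add, add_assoc]⟩

section Triangle

variable {𝕜 E : Type*} [Field 𝕜] [LinearOrder 𝕜] [IsStrictOrderedRing 𝕜] [AddCommGroup E]
  [Module 𝕜 E] {x y z a b d w : E}

theorem segment_union_segment (hy : y ∈ segment 𝕜 x z) :
    segment 𝕜 x y ∪ segment 𝕜 y z = segment 𝕜 x z := by
  apply Subset.antisymm
  · exact union_subset
      ((convex_segment x z).segment_subset (left_mem_segment 𝕜 x z) hy)
      ((convex_segment x z).segment_subset hy (right_mem_segment 𝕜 x z))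
  · intro u hu
    rw [mem_segment_iff_wbtw] at hy hu
    have same_ray : SameRay 𝕜 (y -ᵥ x) (u -ᵥ x) := by
      obtain ⟨s, ⟨hs, -⟩, rfl⟩ := hy
      obtain ⟨t, ⟨ht, -⟩, rfl⟩ := hu
      simpa only [AffineMap.lineMap_vsub_left] using
        ((SameRay.refl (z -ᵥ x)).nonneg_smul_left hs).nonneg_smul_right ht
    rcases wbtw_total_of_sameRay_vsub_left same_ray with hxyu | hxuy
    · exact .inr (mem_segment_iff_wbtw.2 (hu.trans_left_right hxyu))
    · exact .inl (mem_segment_iff_wbtw.2 hxuy)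

theorem convexHull_union_convexHull_of_mem_segment (hy : y ∈ segment 𝕜 x z) :
    convexHull 𝕜 {x, y, w} ∪ convexHull 𝕜 {y, z, w} = convexHull 𝕜 {x, z, w} := by
  simp only [← convexJoin_segment_singleton, ← convexJoin_union_left, segment_union_segment hy]

theorem exists_mem_segment_add_smul_of_mem_convexHull (hx : x ∈ convexHull 𝕜 {a, b + d, b}) :
    ∃ y ∈ segment 𝕜 a b, ∃ t : 𝕜, 0 ≤ t ∧ x = y + t • d := by
  rw [← convexJoin_segment_singleton, convexJoin_comm, mem_convexJoin] at hx
  obtain ⟨_, rfl, z, hz, hx⟩ := hx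
  obtain ⟨z', hz', s, hs, rfl⟩ := exists_mem_segment_add_smul_of_mem_segment_add hz
  obtain ⟨y, hy, t, ht, rfl⟩ := exists_mem_segment_add_smul_of_mem_segment_add hx
  exact ⟨y, (convex_segment a _).segment_subset (right_mem_segment 𝕜 a _) hz' hy, t * s,
    mul_nonneg ht hs, by rw [mul_smul]⟩

theorem exists_mem_sides_add_smul_of_mem_convexHull (hd : w + d ∈ segment 𝕜 a b)
    (hx : x ∈ convexHull 𝕜 {a, b, w}) :
    ∃ y ∈ segment 𝕜 a w ∪ segment 𝕜 w b, ∃ t : 𝕜, 0 ≤ t ∧ x = y + t • d := by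
  rw [← convexHull_union_convexHull_of_mem_segment hd] at hx
  rcases hx with hx | hx
  · obtain ⟨y, hy, hyx⟩ := exists_mem_segment_add_smul_of_mem_convexHull hx
    exact ⟨y, .inl hy, hyx⟩
  · rw [insert_comm] at hx
    obtain ⟨y, hy, hyx⟩ := exists_mem_segment_add_smul_of_mem_convexHull hx
    exact ⟨y, .inr (segment_symm 𝕜 b w ▸ hy), hyx⟩

end Triangle

theorem onAbove.mono {T : Set (ℝ × ℝ)} {r s : ℝ × ℝ} (hr : onAbove T r) (h₁ : r.1 = s.1)
    (h₂ : r.2 ≤ s.2) : onAbove T s :=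
  fun t ht hts => (hr t ht (hts.trans h₁.symm)).trans h₂

theorem stmt_8_general {T : Set (ℝ × ℝ)} {c q w p : ℝ × ℝ} (hp : p ∈ segment ℝ c q)
    (hpw : p.1 = w.1) (hwp : w.2 ≤ p.2) (hcw : seesT T c w) (hwq : seesT T w q) :
    ∀ x ∈ convexHull ℝ ({c, q, w} : Set (ℝ × ℝ)), onAbove T x := by
  intro x hx
  have hd : w + (p - w) ∈ segment ℝ c q := by rwa [add_sub_cancel]
  obtain ⟨y, hy, t, ht, rfl⟩ := exists_mem_sides_add_smul_of_mem_convexHull hd hx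
  have hyT : onAbove T y := hy.elim (hcw y) (hwq y)
  refine hyT.mono ?_ ?_
  · simp [hpw]
  · simpa using mul_nonneg ht (sub_nonneg.2 hwp)

theorem stmt_8 (n : ℕ) (hn : 2 ≤ n) (v : Fin n → ℝ × ℝ)
    (hmono : ∀ i j : Fin n, i < j → (v i).1 < (v j).1)
    (h : ℝ) (hh : ∀ i : Fin n, (v i).2 < h)
    (c1 q1 : ℝ) (hcq : c1 ≤ q1)
    (w : ℝ × ℝ) (hw1 : c1 ≤ w.1) (hw2 : w.1 ≤ q1) (hwh : w.2 ≤ h)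
    (hcw : ∀ x ∈ segment ℝ (c1, h) w, onAbove (terrain n hn v) x)
    (hwq : ∀ x ∈ segment ℝ w (q1, h), onAbove (terrain n hn v) x) :
    ∀ x ∈ convexHull ℝ ({(c1, h), (q1, h), w} : Set (ℝ × ℝ)),
      onAbove (terrain n hn v) x := by
  have hp : (w.1, h) ∈ segment ℝ (c1, h) (q1, h) :=
    Prod.image_mk_segment_left (𝕜 := ℝ) c1 q1 h ▸
      mem_image_of_mem _ (Icc_subset_segment ⟨hw1, hw2⟩)
  exact stmt_8_general hp rfl hwh hcw hwq
end

section
/- (Convex-vertex edge lemma) Let T be a terrain with altitude line A at height h, and let j be an index with j + 1 ≤ n - 1. Let g = (gx, h) ∈ A with gx ≤ (v j).1, suppose g sees the vertex v j, and suppose v (j+1) lies on or above the ray from g through v j, i.e. ((v j).1 - gx) * ((v (j+1)).2 - (v j).2) - ((v j).2 - h) * ((v (j+1)).1 - (v j).1) ≥ 0. Then g sees every point of the closed segment [v j, v (j+1)]. -/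
open Set

/-!
Since `v (j+1)` lies on or above the ray from `g` through `v j`, the lower boundary of the triangle
with vertices `g`, `v j`, `v (j+1)` is the path made of its sides `[g, v j]` and `[v j, v (j+1)]`.
The first side is above the terrain by assumption and the second is an edge of the terrain, so every
point of the triangle is on or above the terrain, and the triangle contains all the segments from
`g` to points of `[v j, v (j+1)]`.
-/

section Cross

variable {R : Type*} [CommRing R] {a b c p q : R × R}

/-- Twice the signed area of the triangle `a b c`. It is nonnegative if and only if the path
`a → b → c` does not turn right; for `a.1 < b.1` this means that `c` lies on or above the line
through `a` and `b`. -/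
def cross (a b c : R × R) : R :=
  (b.1 - a.1) * (c.2 - b.2) - (b.2 - a.2) * (c.1 - b.1)

theorem cross_rotate : cross b c a = cross a b c := by
  unfold cross
  ring

theorem cross_self_left : cross a b a = 0 := by
  unfold cross
  ring

theorem cross_self_right : cross a b b = 0 := by
  unfold cross
  ring

theorem cross_smul_add_smul {s t : R} (hst : s + t = 1) :
    cross a b (s • p + t • q) = s * cross a b p + t * cross a b q := by
  obtain rfl : s = 1 - t := eq_sub_of_add_eq hst
  simp only [cross, Prod.fst_add, Prod.snd_add, Prod.smul_fst, Prod.smul_snd, smul_eq_mul]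
  ring

theorem cross_sub_cross_of_fst_eq (hpq : p.1 = q.1) :
    cross a b p - cross a b q = (b.1 - a.1) * (p.2 - q.2) := by
  rw [cross, cross, hpq]
  ring

variable [PartialOrder R]

theorem cross_eq_zero_of_mem_segment (hp : p ∈ segment R a b) : cross a b p = 0 := by
  obtain ⟨s, t, -, -, hst, rfl⟩ := hp
  rw [cross_smul_add_smul hst, cross_self_left, cross_self_right, mul_zero, mul_zero, add_zero]

theorem injOn_fst_segment [NoZeroDivisors R] (hab : a.1 ≠ b.1) :
    InjOn Prod.fst (segment R a b) := by
  intro p hp q hq hpq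
  have hmul : (b.1 - a.1) * (p.2 - q.2) = 0 := by
    rw [← cross_sub_cross_of_fst_eq hpq, cross_eq_zero_of_mem_segment hp,
      cross_eq_zero_of_mem_segment hq, sub_zero]
  exact Prod.ext hpq (sub_eq_zero.1 ((mul_eq_zero.1 hmul).resolve_left (sub_ne_zero.2 hab.symm)))

theorem convex_setOf_cross_nonneg [IsOrderedRing R] : Convex R {p : R × R | 0 ≤ cross a b p} := by
  intro p hp q hq s t hs ht hst
  rw [mem_ofPred_eq, cross_smul_add_smul hst]
  exact add_nonneg (mul_nonneg hs hp) (mul_nonneg ht hq)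

end Cross

section Segment

variable {𝕜 : Type*} [Field 𝕜] [LinearOrder 𝕜] [IsStrictOrderedRing 𝕜] {a b g p : 𝕜 × 𝕜}

theorem image_fst_segment (hab : a.1 ≤ b.1) : Prod.fst '' segment 𝕜 a b = Icc a.1 b.1 := by
  rw [← segment_eq_Icc hab]
  exact image_segment 𝕜 (LinearMap.fst 𝕜 𝕜 𝕜).toAffineMap a b

theorem exists_mem_segment_le_of_cross_nonneg (hab : a.1 < b.1) (hp : p.1 ∈ Icc a.1 b.1)
    (hcross : 0 ≤ cross a b p) : ∃ q ∈ segment 𝕜 a b, q.1 = p.1 ∧ q.2 ≤ p.2 := by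
  rw [← image_fst_segment hab.le] at hp
  obtain ⟨q, hq, hqp⟩ := hp
  have hmul : 0 ≤ (b.1 - a.1) * (p.2 - q.2) := by
    rwa [← cross_sub_cross_of_fst_eq hqp.symm, cross_eq_zero_of_mem_segment hq, sub_zero]
  exact ⟨q, hq, hqp, sub_nonneg.1 (nonneg_of_mul_nonneg_right hmul (sub_pos.2 hab))⟩

theorem exists_mem_segment_union_le_of_mem_convexHull (hga : g.1 ≤ a.1) (hab : a.1 < b.1)
    (hturn : 0 ≤ cross g a b) (hp : p ∈ convexHull 𝕜 {g, a, b}) :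
    ∃ q ∈ segment 𝕜 g a ∪ segment 𝕜 a b, q.1 = p.1 ∧ q.2 ≤ p.2 := by
  have mem_of_vertices {s : Set (𝕜 × 𝕜)} (hs : Convex 𝕜 s) (hg : g ∈ s) (ha : a ∈ s)
      (hb : b ∈ s) : p ∈ s :=
    convexHull_min (insert_subset hg (pair_subset ha hb)) hs hp
  have hcross_ga : 0 ≤ cross g a p :=
    mem_of_vertices convex_setOf_cross_nonneg cross_self_left.ge cross_self_right.ge hturn
  have hcross_ab : 0 ≤ cross a b p :=
    mem_of_vertices convex_setOf_cross_nonneg (hturn.trans_eq cross_rotate.symm)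
      cross_self_left.ge cross_self_right.ge
  have hp_fst : p.1 ∈ Icc g.1 b.1 :=
    mem_of_vertices ((convex_Icc g.1 b.1).linear_preimage (LinearMap.fst 𝕜 𝕜 𝕜))
      ⟨le_rfl, hga.trans hab.le⟩ ⟨hga, hab.le⟩ ⟨hga.trans hab.le, le_rfl⟩
  rcases le_or_gt a.1 p.1 with hap | hpa
  · obtain ⟨q, hq, hqp⟩ := exists_mem_segment_le_of_cross_nonneg hab ⟨hap, hp_fst.2⟩ hcross_ab
    exact ⟨q, .inr hq, hqp⟩
  · obtain ⟨q, hq, hqp⟩ := exists_mem_segment_le_of_cross_nonneg (hp_fst.1.trans_lt hpa)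
      ⟨hp_fst.1, hpa.le⟩ hcross_ga
    exact ⟨q, .inl hq, hqp⟩

end Segment

section Visibility

variable {T : Set (ℝ × ℝ)} {a b g p q : ℝ × ℝ}

theorem onAbove.of_le (hq : onAbove T q) (hfst : q.1 = p.1) (hsnd : q.2 ≤ p.2) : onAbove T p :=
  fun t ht htp => (hq t ht (htp.trans hfst.symm)).trans hsnd

theorem onAbove_of_mem (hT : InjOn Prod.fst T) (hp : p ∈ T) : onAbove T p :=
  fun _ ht htp => (congrArg Prod.snd (hT ht hp htp)).le

theorem seesT_of_segment_subset (hT : InjOn Prod.fst T) (hab : segment ℝ a b ⊆ T) : seesT T a b :=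
  fun _ hp => onAbove_of_mem hT (hab hp)

theorem seesT.of_mem_segment_of_cross_nonneg (hga : g.1 ≤ a.1) (hab : a.1 < b.1)
    (hturn : 0 ≤ cross g a b) (hsees_ga : seesT T g a) (hsees_ab : seesT T a b)
    (hq : q ∈ segment ℝ a b) : seesT T g q := by
  intro p hp
  have hp_hull : p ∈ convexHull ℝ {g, a, b} := by
    rw [← convexJoin_singleton_segment]
    exact mem_convexJoin.2 ⟨g, rfl, q, hq, hp⟩
  obtain ⟨r, hr | hr, hfst, hsnd⟩ :=
    exists_mem_segment_union_le_of_mem_convexHull hga hab hturn hp_hull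
  · exact (hsees_ga r hr).of_le hfst hsnd
  · exact (hsees_ab r hr).of_le hfst hsnd

end Visibility

section Terrain

variable {n : ℕ} {hn : 2 ≤ n} {v : Fin n → ℝ × ℝ} {t : ℝ × ℝ}

theorem mem_terrain_iff :
    t ∈ terrain n hn v ↔
      ∃ (i : ℕ) (hi : i + 1 < n), t ∈ segment ℝ (v ⟨i, by omega⟩) (v ⟨i + 1, hi⟩) := by
  simp only [terrain, mem_iUnion]
  exact ⟨fun ⟨i, ht⟩ => ⟨i, by omega, ht⟩, fun ⟨i, hi, ht⟩ => ⟨⟨i, by omega⟩, ht⟩⟩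

theorem injOn_fst_terrain (hv : StrictMono fun i => (v i).1) :
    InjOn Prod.fst (terrain n hn v) := by
  intro p hp q hq hpq
  obtain ⟨i, hi, hpi⟩ := mem_terrain_iff.1 hp
  obtain ⟨k, hk, hqk⟩ := mem_terrain_iff.1 hq
  wlog hik : i ≤ k generalizing p q i k
  · exact (this hq hp hpq.symm k hk hqk i hi hpi (by omega)).symm
  have hlt (m : ℕ) (hm : m + 1 < n) : (v ⟨m, by omega⟩).1 < (v ⟨m + 1, hm⟩).1 :=
    hv (Fin.mk_lt_mk.2 m.lt_succ_self)
  rcases hik.eq_or_lt with rfl | hik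
  · exact injOn_fst_segment (hlt i hi).ne hpi hqk hpq
  have hfst (m : ℕ) (hm : m + 1 < n) {r : ℝ × ℝ}
      (hr : r ∈ segment ℝ (v ⟨m, by omega⟩) (v ⟨m + 1, hm⟩)) :
      r.1 ∈ Icc (v ⟨m, by omega⟩).1 (v ⟨m + 1, hm⟩).1 :=
    image_fst_segment (hlt m hm).le ▸ mem_image_of_mem Prod.fst hr
  -- Distinct edges can only share an abscissa at a common endpoint.
  have hp_le : p.1 ≤ (v ⟨i + 1, hi⟩).1 := (hfst i hi hpi).2
  have hle_q : (v ⟨k, by omega⟩).1 ≤ q.1 := (hfst k hk hqk).1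
  have hki : k = i + 1 := by
    have hle : (⟨k, by omega⟩ : Fin n) ≤ ⟨i + 1, hi⟩ := hv.le_iff_le.1 (hle_q.trans (hpq ▸ hp_le))
    exact le_antisymm (Fin.mk_le_mk.1 hle) hik
  subst hki
  calc
    p = v ⟨i + 1, hi⟩ :=
      injOn_fst_segment (hlt i hi).ne hpi (right_mem_segment ..) (hp_le.antisymm (hpq ▸ hle_q))
    _ = q := injOn_fst_segment (hlt _ hk).ne (left_mem_segment ..) hqk
      (hle_q.antisymm (hpq ▸ hp_le))

end Terrain

theorem stmt_9_general (n : ℕ) (hn : 2 ≤ n) (v : Fin n → ℝ × ℝ)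
    (hv : StrictMono fun i => (v i).1) (j : ℕ) (hj : j + 1 < n)
    (g : ℝ × ℝ) (hg : g.1 ≤ (v ⟨j, by omega⟩).1)
    (hseesVj : seesT (terrain n hn v) g (v ⟨j, by omega⟩))
    (hturn : 0 ≤ cross g (v ⟨j, by omega⟩) (v ⟨j + 1, hj⟩)) :
    ∀ x ∈ segment ℝ (v ⟨j, by omega⟩) (v ⟨j + 1, hj⟩), seesT (terrain n hn v) g x := by
  have hedge : seesT (terrain n hn v) (v ⟨j, by omega⟩) (v ⟨j + 1, hj⟩) :=
    seesT_of_segment_subset (injOn_fst_terrain hv) fun t ht => mem_terrain_iff.2 ⟨j, hj, ht⟩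
  have hlt : (v ⟨j, by omega⟩).1 < (v ⟨j + 1, hj⟩).1 := hv (Fin.mk_lt_mk.2 j.lt_succ_self)
  exact fun x hx => hseesVj.of_mem_segment_of_cross_nonneg hg hlt hturn hedge hx

theorem stmt_9 (n : ℕ) (hn : 2 ≤ n) (v : Fin n → ℝ × ℝ)
    (hmono : ∀ i j : Fin n, i < j → (v i).1 < (v j).1)
    (h : ℝ) (hh : ∀ i : Fin n, (v i).2 < h)
    (j : ℕ) (hj : j + 1 ≤ n - 1)
    (gx : ℝ) (hgA : (gx, h) ∈ altLine n hn v h)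
    (hgx : gx ≤ (v ⟨j, by omega⟩).1)
    (hseesVj : seesT (terrain n hn v) (gx, h) (v ⟨j, by omega⟩))
    (habove : ((v ⟨j, by omega⟩).1 - gx) * ((v ⟨j + 1, by omega⟩).2 - (v ⟨j, by omega⟩).2) -
      ((v ⟨j, by omega⟩).2 - h) * ((v ⟨j + 1, by omega⟩).1 - (v ⟨j, by omega⟩).1) ≥ 0) :
    ∀ x ∈ segment ℝ (v ⟨j, by omega⟩) (v ⟨j + 1, by omega⟩),
      seesT (terrain n hn v) (gx, h) x :=
  stmt_9_general n hn v (fun i k => hmono i k) j (by omega) (gx, h) hgx hseesVj habove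
end

section
/- (Uni-monotone polygons are perfect) For every uni-monotone polygon P, the minimum cardinality of a guard cover equals the maximum cardinality of a witness set: there exists m ∈ ℕ such that m is the least element of {k : ∃ finite guard cover G ⊆ P with Set.ncard G = k} and m is the greatest element of {k : ∃ finite witness set W ⊆ P with Set.ncard W = k}. -/
open Set

/-!
A guard that sees `q` may be slid vertically up to the line `y = h` and still sees `q`. Hence the
guards may be taken on that line, and two points have disjoint visibility polygons as soon as no
point of the line is seen by both. The part of the line seen by `q` is a compact interval, so guard
covers and witness sets turn into piercing sets and disjoint subfamilies of a family of intervals,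
for which the greedy choice of the leftmost right endpoint gives equality. The sizes are finite
because the part of the region above each edge is convex, hence guarded by any one of its points.
-/

section Piercing

variable {ι α : Type*} [ConditionallyCompleteLinearOrder α]

theorem exists_finset_card_le_forall_mem_Icc {l r : ι → α} {S : Set ι} {k : ℕ}
    (hlr : ∀ i ∈ S, l i ≤ r i) (hbdd : BddBelow (r '' S))
    (hpack : ∀ T : Finset ι, (T : Set ι) ⊆ S →
      (T : Set ι).PairwiseDisjoint (fun i ↦ Icc (l i) (r i)) → T.card ≤ k) :
    ∃ X : Finset α, X.card ≤ k ∧ ∀ i ∈ S, ∃ x ∈ X, x ∈ Icc (l i) (r i) := by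
  classical
  induction k generalizing S with
  | zero =>
    have hS : S = ∅ := eq_empty_of_forall_notMem fun i hi ↦ by
      simpa using hpack {i} (by simpa using hi) (by simp)
    exact ⟨∅, by simp, by simp [hS]⟩
  | succ k ih =>
    rcases S.eq_empty_or_nonempty with rfl | hS
    · exact ⟨∅, by simp, by simp⟩
    set ρ := sInf (r '' S)
    have hpack_right : ∀ T : Finset ι, (T : Set ι) ⊆ {i ∈ S | ρ < l i} →
        (T : Set ι).PairwiseDisjoint (fun i ↦ Icc (l i) (r i)) → T.card ≤ k := by
      intro T hTS hT
      rcases T.eq_empty_or_nonempty with rfl | hTne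
      · simp
      obtain ⟨j, hjT, hj⟩ := T.exists_min_image l hTne
      obtain ⟨_, ⟨i, hiS, rfl⟩, hij⟩ := exists_lt_of_csInf_lt (hS.image r) (hTS hjT).2
      have hleft : ∀ t ∈ T, r i < l t := fun t ht ↦ hij.trans_le (hj t ht)
      have hiT : i ∉ T := fun hi ↦ (hleft i hi).not_ge (hlr i hiS)
      have hcard : (insert i T).card ≤ k + 1 := by
        refine hpack _ ?_ ?_
        · rw [Finset.coe_insert]
          exact insert_subset hiS fun t ht ↦ (hTS ht).1
        · rw [Finset.coe_insert]
          exact hT.insert fun t ht _ ↦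
            disjoint_left.2 fun x hxi hxt ↦ (hleft t ht).not_ge (hxt.1.trans hxi.2)
      rw [Finset.card_insert_of_notMem hiT] at hcard
      omega
    obtain ⟨X, hXcard, hX⟩ := ih (fun i hi ↦ hlr i hi.1)
      (hbdd.mono (image_mono (sep_subset _ _))) hpack_right
    refine ⟨insert ρ X, (Finset.card_insert_le _ _).trans (by omega), fun i hi ↦ ?_⟩
    rcases lt_or_ge ρ (l i) with hl | hl
    · obtain ⟨x, hxX, hx⟩ := hX i ⟨hi, hl⟩
      exact ⟨x, Finset.mem_insert_of_mem hxX, hx⟩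
    · exact ⟨ρ, Finset.mem_insert_self _ _, hl, csInf_le hbdd (mem_image_of_mem r hi)⟩

end Piercing

section Visibility

variable {P : Set (ℝ × ℝ)} {p q : ℝ × ℝ}

theorem mem_visIn_iff_segment_subset : q ∈ visIn P p ↔ segment ℝ p q ⊆ P :=
  ⟨fun hq ↦ hq.2, fun hpq ↦ ⟨hpq (right_mem_segment ℝ p q), hpq⟩⟩

theorem mem_visIn_comm : q ∈ visIn P p ↔ p ∈ visIn P q := by
  rw [mem_visIn_iff_segment_subset, mem_visIn_iff_segment_subset, segment_symm]

theorem mem_visIn_self (hp : p ∈ P) : p ∈ visIn P p := by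
  simpa [mem_visIn_iff_segment_subset] using hp

theorem starConvex_visIn : StarConvex ℝ p (visIn P p) :=
  starConvex_iff_segment_subset.2 fun q hq _ hz ↦ mem_visIn_iff_segment_subset.2 <|
    ((convex_segment p q).segment_subset (left_mem_segment ℝ p q) hz).trans hq.2

theorem isClosed_visIn (hP : IsClosed P) : IsClosed (visIn P p) := by
  have hvis : visIn P p = ⋂ t ∈ Icc (0 : ℝ) 1, {q | AffineMap.lineMap p q t ∈ P} := by
    ext q
    simp only [mem_visIn_iff_segment_subset, segment_eq_image_lineMap, image_subset_iff, mem_iInter]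
    rfl
  rw [hvis]
  refine isClosed_biInter fun t _ ↦ hP.preimage ?_
  simp only [AffineMap.lineMap_apply_module]
  fun_prop

end Visibility

section Duality

variable {P G W : Set (ℝ × ℝ)}

/-- `G` is a guard cover of `P`: every point of `P` is seen by a point of `G`. Finiteness is part of
the notion because `Set.ncard` is `0` on infinite sets. -/
def IsGuardCover_s13 (P G : Set (ℝ × ℝ)) : Prop :=
  G.Finite ∧ G ⊆ P ∧ P ⊆ ⋃ g ∈ G, visIn P g

/-- `W` is a witness set of `P`: no point of `P` is seen by two points of `W`. It is finite for the
same reason as a guard cover. -/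
def IsWitnessSet (P W : Set (ℝ × ℝ)) : Prop :=
  W.Finite ∧ W ⊆ P ∧ W.PairwiseDisjoint (visIn P)

/-- A region is perfect if its minimum guard covers and maximum witness sets have the same size. -/
def IsPerfect (P : Set (ℝ × ℝ)) : Prop :=
  ∃ m : ℕ, IsLeast {k | ∃ G, IsGuardCover_s13 P G ∧ G.ncard = k} m ∧
    IsGreatest {k | ∃ W, IsWitnessSet P W ∧ W.ncard = k} m

theorem IsWitnessSet.ncard_le_ncard (hW : IsWitnessSet P W) (hG : IsGuardCover_s13 P G) :
    W.ncard ≤ G.ncard := by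
  obtain ⟨-, hWP, hdisj⟩ := hW
  obtain ⟨hGfin, -, hcover⟩ := hG
  have hseen : ∀ w ∈ W, ∃ g ∈ G, g ∈ visIn P w := fun w hw ↦ by
    obtain ⟨g, hg, hwg⟩ := mem_iUnion₂.1 (hcover (hWP hw))
    exact ⟨g, hg, mem_visIn_comm.1 hwg⟩
  choose! guard hguard hvis using hseen
  refine ncard_le_ncard_of_injOn guard hguard (fun w hw w' hw' heq ↦ ?_) hGfin
  exact hdisj.elim_set hw hw' (guard w) (hvis w hw) (heq ▸ hvis w' hw')

theorem IsGuardCover_s13.exists_isWitnessSet_maximal (hG : IsGuardCover_s13 P G) :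
    ∃ W, IsWitnessSet P W ∧ ∀ W', IsWitnessSet P W' → W'.ncard ≤ W.ncard := by
  have hne : (ncard '' {W | IsWitnessSet P W}).Nonempty :=
    ⟨_, mem_image_of_mem ncard (show IsWitnessSet P ∅ by simp [IsWitnessSet])⟩
  have hbdd : BddAbove (ncard '' {W | IsWitnessSet P W}) :=
    ⟨G.ncard, forall_mem_image.2 fun _ hW ↦ IsWitnessSet.ncard_le_ncard hW hG⟩
  obtain ⟨W, hW, hWmax⟩ := Nat.sSup_mem hne hbdd
  exact ⟨W, hW, fun W' hW' ↦ hWmax ▸ le_csSup hbdd (mem_image_of_mem ncard hW')⟩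

theorem IsGuardCover_s13.isPerfect_of_ncard_le (hG : IsGuardCover_s13 P G) (hW : IsWitnessSet P W)
    (hGW : G.ncard ≤ W.ncard) : IsPerfect P := by
  refine ⟨W.ncard, ⟨⟨G, hG, hGW.antisymm (hW.ncard_le_ncard hG)⟩, ?_⟩, ⟨W, hW, rfl⟩, ?_⟩
  · rintro _ ⟨G', hG', rfl⟩
    exact hW.ncard_le_ncard hG'
  · rintro _ ⟨W', hW', rfl⟩
    exact (hW'.ncard_le_ncard hG).trans hGW

theorem exists_isGuardCover_iUnion {ι : Type*} [Finite ι] {K : ι → Set (ℝ × ℝ)}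
    (hK : ∀ i, Convex ℝ (K i)) : ∃ G, IsGuardCover_s13 (⋃ i, K i) G := by
  let guard (i : {i // (K i).Nonempty}) : ℝ × ℝ := i.2.some
  refine ⟨range guard, finite_range _, ?_, fun q hq ↦ ?_⟩
  · rintro _ ⟨i, rfl⟩
    exact mem_iUnion_of_mem i.1 i.2.some_mem
  · obtain ⟨i, hi⟩ := mem_iUnion.1 hq
    refine mem_biUnion (mem_range_self ⟨i, q, hi⟩) (mem_visIn_iff_segment_subset.2 ?_)
    exact ((hK i).segment_subset (Nonempty.some_mem _) hi).trans (subset_iUnion K i)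

end Duality

/-- The points lying vertically above a point of `C` and not above the line `y = h`; a uni-monotone
polygon is the case where `C` is its lower chain. -/
def regionAbove (C : Set (ℝ × ℝ)) (h : ℝ) : Set (ℝ × ℝ) :=
  {p | p.2 ≤ h ∧ ∃ c ∈ C, c.1 = p.1 ∧ c.2 ≤ p.2}

section RegionAbove

variable {C : Set (ℝ × ℝ)} {h : ℝ} {p q : ℝ × ℝ}

theorem mem_regionAbove_of_le (hp : p ∈ regionAbove C h) (hpq : p.1 = q.1) (hle : p.2 ≤ q.2)
    (hq : q.2 ≤ h) : q ∈ regionAbove C h := by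
  obtain ⟨-, c, hc, hcp, hle'⟩ := hp
  exact ⟨hq, c, hc, hcp.trans hpq, hle'.trans hle⟩

open Pointwise in
theorem regionAbove_eq_add_inter :
    regionAbove C h = (C + {0} ×ˢ Ici 0) ∩ {p | p.2 ≤ h} := by
  ext p
  constructor
  · rintro ⟨hp, c, hc, hcp, hle⟩
    exact ⟨⟨c, hc, p - c, by simpa [hcp] using hle, by simp⟩, hp⟩
  · rintro ⟨⟨c, hc, d, ⟨hd₁, hd₂⟩, rfl⟩, hp⟩
    exact ⟨hp, c, hc, by simpa using hd₁, by simpa using hd₂⟩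

theorem isClosed_regionAbove (hC : IsCompact C) : IsClosed (regionAbove C h) := by
  rw [regionAbove_eq_add_inter]
  exact ((isClosed_singleton.prod isClosed_Ici).add_left_of_isCompact hC).inter
    (isClosed_le continuous_snd continuous_const)

theorem convex_regionAbove (hC : Convex ℝ C) : Convex ℝ (regionAbove C h) := by
  rw [regionAbove_eq_add_inter]
  exact (hC.add ((convex_singleton 0).prod (convex_Ici 0))).inter
    ((convex_Iic h).linear_preimage (LinearMap.snd ℝ ℝ ℝ))

theorem regionAbove_iUnion {ι : Type*} {K : ι → Set (ℝ × ℝ)} :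
    regionAbove (⋃ i, K i) h = ⋃ i, regionAbove (K i) h := by
  ext p
  simp only [regionAbove, mem_iUnion, mem_ofPred_eq]
  tauto

/-- The abscissae of the points of the line `y = h` that see `q` within `regionAbove C h`. -/
def topVis (C : Set (ℝ × ℝ)) (h : ℝ) (q : ℝ × ℝ) : Set ℝ :=
  {x | (x, h) ∈ visIn (regionAbove C h) q}

theorem fst_mem_topVis (hp : p ∈ visIn (regionAbove C h) q) : p.1 ∈ topVis C h q := by
  refine mem_visIn_iff_segment_subset.2 ?_
  have hqh : q.2 ≤ h := (hp.2 (left_mem_segment ℝ q p)).1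
  have hph : p.2 ≤ h := hp.1.1
  rintro _ ⟨a, b, ha, hb, hab, rfl⟩
  refine mem_regionAbove_of_le (hp.2 ⟨a, b, ha, hb, hab, rfl⟩) rfl ?_ ?_
  · change a * q.2 + b * p.2 ≤ a * q.2 + b * h
    gcongr
  · calc a * q.2 + b * h ≤ a * h + b * h := by gcongr
      _ = h := by rw [← add_mul, hab, one_mul]

theorem starConvex_topVis : StarConvex ℝ q.1 (topVis C h q) :=
  fun _ hx _ _ ha hb hab ↦ fst_mem_topVis (starConvex_visIn hx ha hb hab)

theorem topVis_subset_fst_image : topVis C h q ⊆ Prod.fst '' C := by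
  rintro x ⟨⟨-, c, hc, hcx, -⟩, -⟩
  exact ⟨c, hc, hcx⟩

theorem isCompact_topVis (hC : IsCompact C) : IsCompact (topVis C h q) := by
  have hclosed : IsClosed (topVis C h q) :=
    (isClosed_visIn (isClosed_regionAbove hC)).preimage (by fun_prop : Continuous fun x ↦ (x, h))
  exact (hC.image continuous_fst).of_isClosed_subset hclosed topVis_subset_fst_image

theorem exists_topVis_eq_Icc (hC : IsCompact C) (hq : q ∈ regionAbove C h) :
    ∃ l r, l ≤ r ∧ topVis C h q = Icc l r := by
  have hq_mem : q.1 ∈ topVis C h q := fst_mem_topVis (mem_visIn_self hq)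
  have hIcc := eq_Icc_of_connected_compact
    (starConvex_topVis.isPathConnected hq_mem).isConnected (isCompact_topVis hC)
  rw [hIcc] at hq_mem
  exact ⟨_, _, nonempty_Icc.1 ⟨_, hq_mem⟩, hIcc⟩

theorem isWitnessSet_of_pairwiseDisjoint_topVis {W : Set (ℝ × ℝ)} (hfin : W.Finite)
    (hW : W ⊆ regionAbove C h) (hdisj : W.PairwiseDisjoint (topVis C h)) :
    IsWitnessSet (regionAbove C h) W :=
  ⟨hfin, hW, hdisj.imp_on fun _ _ _ _ _ hd ↦ disjoint_left.2 fun _ hz hz' ↦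
    disjoint_left.1 hd (fst_mem_topVis hz) (fst_mem_topVis hz')⟩

theorem exists_isGuardCover_of_forall_exists_mem_topVis {X : Finset ℝ}
    (hX : ∀ q ∈ regionAbove C h, ∃ x ∈ X, x ∈ topVis C h q) :
    ∃ G, IsGuardCover_s13 (regionAbove C h) G ∧ G.ncard ≤ X.card := by
  have hfin : ((·, h) '' (X : Set ℝ)).Finite := X.finite_toSet.image _
  refine ⟨(·, h) '' (X : Set ℝ) ∩ regionAbove C h,
    ⟨hfin.subset inter_subset_left, inter_subset_right, fun q hq ↦ ?_⟩, ?_⟩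
  · obtain ⟨x, hxX, hx⟩ := hX q hq
    exact mem_biUnion ⟨mem_image_of_mem _ hxX, hx.1⟩ (mem_visIn_comm.1 hx)
  · calc _ ≤ ((·, h) '' (X : Set ℝ)).ncard := ncard_le_ncard inter_subset_left hfin
      _ ≤ (X : Set ℝ).ncard := ncard_image_le X.finite_toSet
      _ = X.card := ncard_coe_finset X

theorem IsGuardCover_s13.isPerfect_regionAbove {G : Set (ℝ × ℝ)} (hC : IsCompact C)
    (hG : IsGuardCover_s13 (regionAbove C h) G) : IsPerfect (regionAbove C h) := by
  obtain ⟨W, hW, hWmax⟩ := hG.exists_isWitnessSet_maximal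
  choose! l r hlr hIcc using fun q (hq : q ∈ regionAbove C h) ↦ exists_topVis_eq_Icc hC hq
  have hbdd : BddBelow (r '' regionAbove C h) := by
    refine (hC.image continuous_fst).bddBelow.mono (image_subset_iff.2 fun q hq ↦ ?_)
    have hr : r q ∈ topVis C h q := hIcc q hq ▸ right_mem_Icc.2 (hlr q hq)
    exact topVis_subset_fst_image hr
  have hpack : ∀ T : Finset (ℝ × ℝ), (T : Set (ℝ × ℝ)) ⊆ regionAbove C h →
      (T : Set (ℝ × ℝ)).PairwiseDisjoint (fun q ↦ Icc (l q) (r q)) → T.card ≤ W.ncard := by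
    intro T hT hdisj
    rw [← ncard_coe_finset]
    refine hWmax _ (isWitnessSet_of_pairwiseDisjoint_topVis T.finite_toSet hT ?_)
    exact hdisj.imp_on fun p hp q hq _ hd ↦ by
      simpa only [Function.onFun, hIcc p (hT hp), hIcc q (hT hq)] using hd
  obtain ⟨X, hXcard, hX⟩ := exists_finset_card_le_forall_mem_Icc hlr hbdd hpack
  obtain ⟨G', hG', hG'card⟩ := exists_isGuardCover_of_forall_exists_mem_topVis (X := X)
    fun q hq ↦ (hIcc q hq).symm ▸ hX q hq
  exact hG'.isPerfect_of_ncard_le hW (hG'card.trans hXcard)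

theorem isPerfect_regionAbove_iUnion {ι : Type*} [Finite ι] {K : ι → Set (ℝ × ℝ)}
    (hcompact : ∀ i, IsCompact (K i)) (hconvex : ∀ i, Convex ℝ (K i)) :
    IsPerfect (regionAbove (⋃ i, K i) h) := by
  obtain ⟨G, hG⟩ := exists_isGuardCover_iUnion fun i ↦ convex_regionAbove (h := h) (hconvex i)
  rw [← regionAbove_iUnion] at hG
  exact hG.isPerfect_regionAbove (isCompact_iUnion hcompact)

end RegionAbove

section Segment

theorem isCompact_segment {E : Type*} [AddCommGroup E] [Module ℝ E] [TopologicalSpace E]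
    [IsTopologicalAddGroup E] [ContinuousSMul ℝ E] (A B : E) : IsCompact (segment ℝ A B) := by
  rw [segment_eq_image_lineMap]
  exact isCompact_Icc.image AffineMap.lineMap_continuous

variable {E F : Type*} [AddCommGroup E] [Module ℝ E] [AddCommGroup F] [Module ℝ F]

theorem fst_image_segment (A B : E × F) : Prod.fst '' segment ℝ A B = segment ℝ A.1 B.1 :=
  image_segment ℝ (LinearMap.fst ℝ E F).toAffineMap A B

theorem injOn_fst_segment_s13 {A B : E × F} (hAB : A.1 ≠ B.1) :
    InjOn Prod.fst (segment ℝ A B) := by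
  rw [segment_eq_image_lineMap]
  rintro _ ⟨s, -, rfl⟩ _ ⟨t, -, rfl⟩ hst
  have hst' : AffineMap.lineMap A.1 B.1 s = AffineMap.lineMap A.1 B.1 t := by
    simpa [AffineMap.lineMap_apply] using hst
  rw [AffineMap.lineMap_injective ℝ hAB hst']

end Segment

section LowerChain

theorem exists_mem_Icc_castSucc_succ {α : Type*} [LinearOrder α] {k : ℕ} {f : Fin (k + 2) → α}
    {x : α} (hx : x ∈ Icc (f 0) (f (Fin.last (k + 1)))) :
    ∃ i : Fin (k + 1), x ∈ Icc (f i.castSucc) (f i.succ) := by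
  by_contra! hnot
  have hle : ∀ i, f i ≤ x := Fin.induction hx.1 fun i hi ↦
    le_of_not_ge fun hxi ↦ hnot i ⟨hi, hxi⟩
  exact hnot (Fin.last k) ⟨hle _, hx.2⟩

variable {n : ℕ} {hn : 2 ≤ n} {v : Fin n → ℝ × ℝ}

theorem fst_image_lowerChain (hv : StrictMono fun i ↦ (v i).1) :
    Prod.fst '' lowerChain n hn v = Icc (v ⟨0, by omega⟩).1 (v ⟨n - 1, by omega⟩).1 := by
  obtain ⟨k, rfl⟩ := Nat.exists_eq_add_of_le' hn
  have himage : Prod.fst '' lowerChain (k + 2) hn v =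
      ⋃ i : Fin (k + 1), Icc (v i.castSucc).1 (v i.succ).1 := by
    rw [lowerChain, image_iUnion]
    refine iUnion_congr fun i ↦ ?_
    rw [fst_image_segment]
    exact segment_eq_Icc (hv i.castSucc_lt_succ).le
  rw [himage]
  refine (iUnion_subset fun i ↦ ?_).antisymm fun x hx ↦ ?_
  · exact Icc_subset_Icc (hv.monotone (Fin.zero_le _)) (hv.monotone (Fin.le_last _))
  · exact mem_iUnion.2 (exists_mem_Icc_castSucc_succ (f := fun i ↦ (v i).1) hx)

theorem injOn_fst_lowerChain (hv : StrictMono fun i ↦ (v i).1) :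
    InjOn Prod.fst (lowerChain n hn v) := by
  obtain ⟨k, rfl⟩ := Nat.exists_eq_add_of_le' hn
  have hlt (i : Fin (k + 1)) : (v i.castSucc).1 < (v i.succ).1 := hv i.castSucc_lt_succ
  have hinj (i : Fin (k + 1)) : InjOn Prod.fst (segment ℝ (v i.castSucc) (v i.succ)) :=
    injOn_fst_segment_s13 (hlt i).ne
  have hfst {i : Fin (k + 1)} {t : ℝ × ℝ} (ht : t ∈ segment ℝ (v i.castSucc) (v i.succ)) :
      t.1 ∈ Icc (v i.castSucc).1 (v i.succ).1 := by
    rw [← segment_eq_Icc (hlt i).le, ← fst_image_segment]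
    exact mem_image_of_mem _ ht
  intro s hs t ht hst
  obtain ⟨i, hi⟩ : ∃ i : Fin (k + 1), s ∈ segment ℝ (v i.castSucc) (v i.succ) := mem_iUnion.1 hs
  obtain ⟨j, hj⟩ : ∃ j : Fin (k + 1), t ∈ segment ℝ (v j.castSucc) (v j.succ) := mem_iUnion.1 ht
  wlog hij : i ≤ j generalizing s t i j
  · exact (this ht hs hst.symm j hj i hi (le_of_not_ge hij)).symm
  rcases hij.eq_or_lt with rfl | hij
  · exact hinj i hi hj hst
  have hvertex_le : (v i.succ).1 ≤ (v j.castSucc).1 :=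
    hv.monotone (Fin.succ_le_castSucc_iff.2 hij)
  have hs_eq : s.1 = (v i.succ).1 :=
    (hfst hi).2.antisymm (hvertex_le.trans (hst ▸ (hfst hj).1))
  have ht_eq : t.1 = (v j.castSucc).1 :=
    ((hst.symm.trans hs_eq).le.trans hvertex_le).antisymm (hfst hj).1
  have hvertex : i.succ = j.castSucc := hv.injective (hs_eq.symm.trans (hst.trans ht_eq))
  calc s = v i.succ := hinj i hi (right_mem_segment ℝ _ _) hs_eq
    _ = v j.castSucc := by rw [hvertex]
    _ = t := (hinj j hj (left_mem_segment ℝ _ _) ht_eq).symm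

theorem uniPoly_eq_regionAbove (hv : StrictMono fun i ↦ (v i).1) (h : ℝ) :
    uniPoly n hn v h = regionAbove (lowerChain n hn v) h := by
  ext p
  constructor
  · rintro ⟨hleft, hright, hp, habove⟩
    obtain ⟨t, ht, htp⟩ : p.1 ∈ Prod.fst '' lowerChain n hn v :=
      fst_image_lowerChain hv ▸ ⟨hleft, hright⟩
    exact ⟨hp, t, ht, htp, habove t ht htp⟩
  · rintro ⟨hp, t, ht, htp, hle⟩
    have hp_fst : p.1 ∈ Icc (v ⟨0, by omega⟩).1 (v ⟨n - 1, by omega⟩).1 :=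
      fst_image_lowerChain hv ▸ ⟨t, ht, htp⟩
    refine ⟨hp_fst.1, hp_fst.2, hp, fun s hs hsp ↦ ?_⟩
    rwa [injOn_fst_lowerChain hv hs ht (hsp.trans htp.symm)]

end LowerChain

theorem stmt_13_general (n : ℕ) (hn : 2 ≤ n) (v : Fin n → ℝ × ℝ)
    (hmono : ∀ i j : Fin n, i < j → (v i).1 < (v j).1) (h : ℝ) :
    IsPerfect (uniPoly n hn v h) := by
  rw [uniPoly_eq_regionAbove hmono]
  exact isPerfect_regionAbove_iUnion (fun _ ↦ isCompact_segment _ _) fun _ ↦ convex_segment _ _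

theorem stmt_13 (n : ℕ) (hn : 2 ≤ n) (v : Fin n → ℝ × ℝ)
    (hmono : ∀ i j : Fin n, i < j → (v i).1 < (v j).1)
    (h : ℝ) (h0 : (v ⟨0, by omega⟩).2 = h) (hlast : (v ⟨n - 1, by omega⟩).2 = h)
    (hbelow : ∀ i : Fin n, (v i).2 ≤ h) :
    ∃ m : ℕ,
      IsLeast {k : ℕ | ∃ G : Set (ℝ × ℝ), G.Finite ∧ G ⊆ uniPoly n hn v h ∧
        uniPoly n hn v h ⊆ (⋃ g ∈ G, visIn (uniPoly n hn v h) g) ∧ G.ncard = k} m ∧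
      IsGreatest {k : ℕ | ∃ W : Set (ℝ × ℝ), W.Finite ∧ W ⊆ uniPoly n hn v h ∧
        (∀ w ∈ W, ∀ w' ∈ W, w ≠ w' →
          visIn (uniPoly n hn v h) w ∩ visIn (uniPoly n hn v h) w' = ∅) ∧ W.ncard = k} m := by
  simpa only [IsPerfect, IsGuardCover_s13, IsWitnessSet, PairwiseDisjoint, Set.Pairwise,
    Function.onFun, disjoint_iff_inter_eq_empty, and_assoc] using stmt_13_general n hn v hmono h
end
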